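/- Among all trees on n vertices, the path P_n has the strictly minimal Laplacian Estrada index: LEE(P_n) < LEE(T) for every n-vertex tree T not isomorphic to P_n. -/

import Mathlib

/-- Laplacian Estrada index: the sum of `exp` over the Laplacian eigenvalues. -/
noncomputable def LEE {V : Type*} [Fintype V] [DecidableEq V] (G : SimpleGraph V) : ℝ :=
  letI := Classical.decRel G.Adj
  ∑ i : V, Real.exp ((SimpleGraph.posSemidef_lapMatrix ℝ G).1.eigenvalues i)

/-!
The Laplacian Estrada index is `∑ₖ tr (Lᵏ) / k!`, so it suffices to compare the generating functions
`∑ₖ tr (Lᵏ) Xᵏ` coefficientwise. Adding an edge changes the Laplacian `L` by a rank-one matrix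
`w wᵀ`, so the Sherman–Morrison formula expresses the powers of the new Laplacian through those of
the old one. When the edge joins two trees, the change in the trace is monotone in the series
`∑ₖ (Lᵏ)ᵥᵥ Xᵏ` of the two parts at the ends of the edge. Among all trees with a marked vertex `v`,
this diagonal series is smallest when `v` is an end of a path: by the same induction, because in a
path the entry of `Lᵏ` between the two ends is at most its diagonal entry at an end, by positive
semidefiniteness and reflection. Traces also grow when edges are added to a spanning tree.
Strictness comes from `tr (L²) = ∑ᵥ (dᵥ - 1) (dᵥ - 2) + 8 |E| - 2 |V|`.
-/

open Matrix PowerSeries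

section CoefficientwiseOrder

/-- The coefficientwise order on power series. -/
instance coeffwisePartialOrder {R : Type*} [Semiring R] [PartialOrder R] : PartialOrder R⟦X⟧ where
  le f g := ∀ k, coeff k f ≤ coeff k g
  le_refl _ _ := le_rfl
  le_trans _ _ _ hfg hgh k := (hfg k).trans (hgh k)
  le_antisymm _ _ hfg hgf := PowerSeries.ext fun k => (hfg k).antisymm (hgf k)

theorem le_iff_forall_coeff_le {R : Type*} [Semiring R] [PartialOrder R] {f g : R⟦X⟧} :
    f ≤ g ↔ ∀ k, coeff k f ≤ coeff k g :=
  Iff.rfl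

theorem nonneg_iff_forall_coeff_nonneg {R : Type*} [Semiring R] [PartialOrder R] {f : R⟦X⟧} :
    0 ≤ f ↔ ∀ k, 0 ≤ coeff k f := by
  simp only [le_iff_forall_coeff_le, map_zero]

instance coeffwiseIsOrderedRing {R : Type*} [Semiring R] [PartialOrder R] [IsOrderedRing R] :
    IsOrderedRing R⟦X⟧ where
  add_le_add_left f g hfg h k := by
    simpa only [map_add] using add_le_add_left (hfg k) (coeff k h)
  zero_le_one := nonneg_iff_forall_coeff_nonneg.mpr fun k => by
    rw [coeff_one]
    split_ifs <;> simp only [zero_le_one, le_refl]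
  mul_le_mul_of_nonneg_left f hf g h hgh k := by
    simp only [coeff_mul]
    rw [nonneg_iff_forall_coeff_nonneg] at hf
    exact Finset.sum_le_sum fun p _ => mul_le_mul_of_nonneg_left (hgh p.2) (hf p.1)
  mul_le_mul_of_nonneg_right f hf g h hgh k := by
    simp only [coeff_mul]
    rw [nonneg_iff_forall_coeff_nonneg] at hf
    exact Finset.sum_le_sum fun p _ => mul_le_mul_of_nonneg_right (hgh p.1) (hf p.2)

theorem X_nonneg {R : Type*} [Semiring R] [PartialOrder R] [IsOrderedRing R] :
    0 ≤ (X : R⟦X⟧) :=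
  nonneg_iff_forall_coeff_nonneg.mpr fun k => by
    rw [coeff_X]
    split_ifs <;> simp only [zero_le_one, le_refl]

theorem derivative_mono {R : Type*} [CommSemiring R] [PartialOrder R] [IsOrderedRing R]
    {f g : R⟦X⟧} (hfg : f ≤ g) : d⁄dX R f ≤ d⁄dX R g := fun k => by
  simpa only [coeff_derivative] using
    mul_le_mul_of_nonneg_right (hfg _) (add_nonneg k.cast_nonneg zero_le_one)

theorem derivative_nonneg {R : Type*} [CommSemiring R] [PartialOrder R] [IsOrderedRing R]
    {f : R⟦X⟧} (hf : 0 ≤ f) : 0 ≤ d⁄dX R f := by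
  simpa only [map_zero] using derivative_mono hf

theorem mul_le_mul_of_abs_coeff_le {R : Type*} [Ring R] [LinearOrder R] [IsOrderedRing R]
    {f g f' g' : R⟦X⟧} (hf : ∀ k, |coeff k f| ≤ coeff k f') (hg : ∀ k, |coeff k g| ≤ coeff k g') :
    f * g ≤ f' * g' := fun k => by
  simp only [coeff_mul]
  refine Finset.sum_le_sum fun p _ => (le_abs_self _).trans ?_
  rw [abs_mul]
  exact mul_le_mul (hf _) (hg _) (abs_nonneg _) ((abs_nonneg _).trans (hf _))

end CoefficientwiseOrder

section GeomSeries

/-- The series `∑ₖ (X c)ᵏ`, characterised as the inverse of `1 - X c`. -/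
noncomputable def geomSeries {R : Type*} [CommRing R] (c : R⟦X⟧) : R⟦X⟧ :=
  invOfUnit (1 - X * c) 1

variable {R : Type*} [CommRing R]

theorem one_sub_mul_geomSeries (c : R⟦X⟧) : (1 - X * c) * geomSeries c = 1 :=
  mul_invOfUnit _ _ (by simp)

theorem eq_geomSeries_mul {c f g : R⟦X⟧} (h : f = g + X * c * f) : f = geomSeries c * g := by
  linear_combination geomSeries c * h - f * one_sub_mul_geomSeries c

variable [PartialOrder R] [IsOrderedRing R]

theorem geomSeries_nonneg {c : R⟦X⟧} (hc : 0 ≤ c) : 0 ≤ geomSeries c := by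
  have unfold_once : geomSeries c = 1 + X * (c * geomSeries c) := by
    linear_combination one_sub_mul_geomSeries c
  refine nonneg_iff_forall_coeff_nonneg.mpr fun k => ?_
  induction k using Nat.strong_induction_on with
  | h k ih =>
    rw [unfold_once]
    cases k with
    | zero => simp
    | succ k =>
      rw [map_add, coeff_one, if_neg k.succ_ne_zero, zero_add, coeff_succ_X_mul, coeff_mul]
      refine Finset.sum_nonneg fun p hp => mul_nonneg ?_ (ih p.2 ?_)
      · exact nonneg_iff_forall_coeff_nonneg.mp hc p.1
      · have := Finset.HasAntidiagonal.mem_antidiagonal.mp hp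
        lia

theorem geomSeries_mono {c d : R⟦X⟧} (hc : 0 ≤ c) (hcd : c ≤ d) :
    geomSeries c ≤ geomSeries d := by
  have hd : geomSeries d = geomSeries c + X * ((d - c) * (geomSeries c * geomSeries d)) := by
    linear_combination geomSeries c * one_sub_mul_geomSeries d
      - geomSeries d * one_sub_mul_geomSeries c
  rw [hd]
  refine le_add_of_nonneg_right (mul_nonneg X_nonneg (mul_nonneg (sub_nonneg.mpr hcd) ?_))
  exact mul_nonneg (geomSeries_nonneg hc) (geomSeries_nonneg (hc.trans hcd))

end GeomSeries

section Resolvent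

theorem map_vecMulVec_C {n R : Type*} [CommRing R] (a b : n → R) :
    (vecMulVec a b).map C = vecMulVec (C ∘ a) (C ∘ b) := by
  ext1 i j
  simp [vecMulVec_apply]

theorem coeff_dotProduct_mulVec_C {n R : Type*} [Fintype n] [CommRing R]
    (M : Matrix n n R⟦X⟧) (a b : n → R) (k : ℕ) :
    coeff k ((C ∘ a) ⬝ᵥ M *ᵥ (C ∘ b)) = a ⬝ᵥ M.map (coeff k) *ᵥ b := by
  simp [dotProduct, mulVec]

variable {n R : Type*} [Fintype n] [DecidableEq n] [CommRing R]

/-- The matrix of generating functions `∑ₖ (Nᵏ)ᵢⱼ Xᵏ`, that is, the resolvent `(1 - X N)⁻¹`. -/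
noncomputable def resolventSeries (N : Matrix n n R) : Matrix n n R⟦X⟧ :=
  of fun i j => PowerSeries.mk fun k => (N ^ k) i j

@[simp] theorem coeff_resolventSeries (N : Matrix n n R) (i j : n) (k : ℕ) :
    coeff k (resolventSeries N i j) = (N ^ k) i j := by
  simp [resolventSeries]

theorem coeff_trace_resolventSeries (N : Matrix n n R) (k : ℕ) :
    coeff k (resolventSeries N).trace = (N ^ k).trace := by
  simp [Matrix.trace]

theorem resolventSeries_fromBlocks {m : Type*} [Fintype m] [DecidableEq m] (A : Matrix n n R)
    (D : Matrix m m R) :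
    resolventSeries (fromBlocks A 0 0 D) =
      fromBlocks (resolventSeries A) 0 0 (resolventSeries D) := by
  ext (i | i) (j | j) k <;> simp [fromBlocks_diagonal_pow]

theorem resolventSeries_submatrix {m : Type*} [Fintype m] [DecidableEq m] (N : Matrix n n R)
    (e : m ≃ n) :
    resolventSeries (N.submatrix e e) = (resolventSeries N).submatrix e e := by
  ext i j k
  have := congr_fun₂ (map_pow (reindexAlgEquiv R R e.symm) N k) i j
  simpa using this.symm

theorem resolventSeries_eq_one_add_mul (N : Matrix n n R) :
    resolventSeries N = 1 + (X : R⟦X⟧) • (resolventSeries N * N.map C) := by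
  ext i j k
  cases k with
  | zero => by_cases h : i = j <;> simp [h]
  | succ k => by_cases h : i = j <;> simp [h, pow_succ, Matrix.mul_apply, coeff_succ_X_mul]

theorem resolventSeries_eq_one_add_mul' (N : Matrix n n R) :
    resolventSeries N = 1 + (X : R⟦X⟧) • (N.map C * resolventSeries N) := by
  ext i j k
  cases k with
  | zero => by_cases h : i = j <;> simp [h]
  | succ k => by_cases h : i = j <;> simp [h, pow_succ', Matrix.mul_apply, coeff_succ_X_mul]

theorem resolventSeries_add (N D : Matrix n n R) :
    resolventSeries (N + D) = resolventSeries N +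
      (X : R⟦X⟧) • (resolventSeries N * D.map C * resolventSeries (N + D)) := by
  have left := congrArg (resolventSeries N * ·) (resolventSeries_eq_one_add_mul' (N + D))
  have right := congrArg (· * resolventSeries (N + D)) (resolventSeries_eq_one_add_mul N)
  simp only [Matrix.map_add _ (map_add C), mul_add, add_mul, mul_one, one_mul, smul_add,
    mul_smul_comm, smul_mul_assoc, ← mul_assoc] at left right
  rw [left, ← add_assoc, add_right_comm, add_left_inj] at right
  exact right.symm

theorem map_coeff_resolventSeries (N : Matrix n n R) (k : ℕ) :
    (resolventSeries N).map (coeff k) = N ^ k := by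
  ext1 i j
  simp

theorem map_coeff_resolventSeries_mul_self (N : Matrix n n R) (k : ℕ) :
    (resolventSeries N * resolventSeries N).map (coeff k) = (k + 1) • N ^ k := by
  ext1 i j
  simp only [map_apply, Matrix.mul_apply, map_sum, coeff_mul, coeff_resolventSeries]
  rw [Finset.sum_comm, Finset.sum_congr rfl fun p hp => by
    rw [← Matrix.mul_apply, ← pow_add, Finset.HasAntidiagonal.mem_antidiagonal.mp hp]]
  rw [Finset.sum_const, Finset.Nat.card_antidiagonal, Matrix.smul_apply]

/-- The generating function `∑ₖ (a ⬝ Nᵏ b) Xᵏ`. -/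
noncomputable def momentSeries (N : Matrix n n R) (a b : n → R) : R⟦X⟧ :=
  (C ∘ a) ⬝ᵥ resolventSeries N *ᵥ (C ∘ b)

theorem coeff_momentSeries (N : Matrix n n R) (a b : n → R) (k : ℕ) :
    coeff k (momentSeries N a b) = a ⬝ᵥ (N ^ k) *ᵥ b := by
  rw [momentSeries, coeff_dotProduct_mulVec_C, map_coeff_resolventSeries]

theorem derivative_X_mul_momentSeries (N : Matrix n n R) (a b : n → R) :
    d⁄dX R (X * momentSeries N a b) =
      (C ∘ a) ⬝ᵥ (resolventSeries N * resolventSeries N) *ᵥ (C ∘ b) := by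
  ext k
  rw [coeff_derivative, coeff_succ_X_mul, coeff_momentSeries, coeff_dotProduct_mulVec_C,
    map_coeff_resolventSeries_mul_self, smul_mulVec, dotProduct_smul, nsmul_eq_mul,
    Nat.cast_succ, mul_comm]

/-- An instance of the Sherman–Morrison formula. -/
theorem resolventSeries_add_vecMulVec (N : Matrix n n R) (a b : n → R) :
    resolventSeries (N + vecMulVec a b) = resolventSeries N +
      (X * geomSeries (momentSeries N b a)) •
        vecMulVec (resolventSeries N *ᵥ (C ∘ a)) ((C ∘ b) ᵥ* resolventSeries N) := by
  have update := resolventSeries_add N (vecMulVec a b)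
  rw [map_vecMulVec_C, mul_vecMulVec, vecMulVec_mul] at update
  have fixed : (C ∘ b) ᵥ* resolventSeries (N + vecMulVec a b) =
      geomSeries (momentSeries N b a) • (C ∘ b) ᵥ* resolventSeries N := by
    ext1 j
    refine eq_geomSeries_mul ?_
    have := congr_fun (congrArg ((C ∘ b) ᵥ* ·) update) j
    simpa [vecMul_add, vecMul_smul, vecMul_vecMulVec, momentSeries, mul_assoc] using this
  rw [update, fixed, vecMulVec_smul, smul_smul]

theorem trace_resolventSeries_add_vecMulVec (N : Matrix n n R) (a b : n → R) :
    (resolventSeries (N + vecMulVec a b)).trace = (resolventSeries N).trace +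
      X * (geomSeries (momentSeries N b a) * d⁄dX R (X * momentSeries N b a)) := by
  rw [resolventSeries_add_vecMulVec, trace_add, trace_smul, trace_vecMulVec, dotProduct_comm,
    ← dotProduct_mulVec, mulVec_mulVec, ← derivative_X_mul_momentSeries, smul_eq_mul,
    mul_assoc]

end Resolvent

section PosSemidef

variable {n : Type*} [Fintype n] [DecidableEq n]

theorem momentSeries_nonneg {N : Matrix n n ℝ} (hN : N.PosSemidef) (a : n → ℝ) :
    0 ≤ momentSeries N a a := nonneg_iff_forall_coeff_nonneg.mpr fun k => by
  simpa [coeff_momentSeries] using (hN.pow k).dotProduct_mulVec_nonneg a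

theorem trace_resolventSeries_le_add_vecMulVec {N : Matrix n n ℝ} (hN : N.PosSemidef)
    (a : n → ℝ) :
    (resolventSeries N).trace ≤ (resolventSeries (N + vecMulVec a a)).trace := by
  have hmom := momentSeries_nonneg hN a
  rw [trace_resolventSeries_add_vecMulVec]
  exact le_add_of_nonneg_right <| mul_nonneg X_nonneg <|
    mul_nonneg (geomSeries_nonneg hmom) (derivative_nonneg (mul_nonneg X_nonneg hmom))

theorem trace_resolventSeries_le_add {N P : Matrix n n ℝ} (hN : N.PosSemidef)
    (hP : P.PosSemidef) :
    (resolventSeries N).trace ≤ (resolventSeries (N + P)).trace := by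
  obtain ⟨m, v, rfl⟩ := posSemidef_iff_eq_sum_vecMulVec.mp hP
  suffices ∀ s : Finset (Fin m), (resolventSeries N).trace ≤
      (resolventSeries (N + ∑ i ∈ s, vecMulVec (v i) (star (v i)))).trace from this Finset.univ
  intro s
  induction s using Finset.cons_induction with
  | empty => simp only [Finset.sum_empty, add_zero, le_refl]
  | cons i s hi ih =>
    rw [Finset.sum_cons, add_left_comm, add_comm]
    refine ih.trans (trace_resolventSeries_le_add_vecMulVec (hN.add ?_) _)
    exact posSemidef_sum _ fun i _ => posSemidef_vecMulVec_self_star (v i)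

theorem two_mul_abs_apply_le_of_posSemidef {n : Type*} {A : Matrix n n ℝ} (hA : A.PosSemidef)
    (i j : n) : 2 * |A i j| ≤ A i i + A j j := by
  have hsymm : A j i = A i j := by simpa using hA.isHermitian.apply i j
  have hadd := (hA.submatrix ![i, j]).dotProduct_mulVec_nonneg ![1, 1]
  have hsub := (hA.submatrix ![i, j]).dotProduct_mulVec_nonneg ![1, -1]
  simp only [dotProduct, mulVec, Pi.star_apply, star_trivial, submatrix_apply, Fin.sum_univ_two,
    cons_val_zero, cons_val_one, cons_val_fin_one, hsymm] at hadd hsub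
  cases abs_cases (A i j) <;> linarith

end PosSemidef

section Laplacian

open SimpleGraph

variable {V W R : Type*} [Fintype V] [DecidableEq V] [Fintype W] [DecidableEq W] [CommRing R]

theorem lapMatrix_apply (G : SimpleGraph V) [DecidableRel G.Adj] (i j : V) :
    G.lapMatrix R i j =
      (if i = j then ∑ k, if G.Adj i k then 1 else 0 else 0) - if G.Adj i j then 1 else 0 := by
  rw [lapMatrix, degMatrix, Matrix.sub_apply, diagonal_apply, adjMatrix_apply,
    degree_eq_sum_if_adj]

theorem lapMatrix_sup_of_disjoint {G H : SimpleGraph V} [DecidableRel G.Adj] [DecidableRel H.Adj]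
    [DecidableRel (G ⊔ H).Adj] (hGH : Disjoint G H) :
    (G ⊔ H).lapMatrix R = G.lapMatrix R + H.lapMatrix R := by
  have hadj : ∀ i j, (if (G ⊔ H).Adj i j then 1 else 0 : R) =
      (if G.Adj i j then 1 else 0) + (if H.Adj i j then 1 else 0) := fun i j => by
    have : ¬ (G.Adj i j ∧ H.Adj i j) := fun h => hGH.le_bot h
    grind
  ext1 i j
  simp_rw [Matrix.add_apply, lapMatrix_apply, hadj, Finset.sum_add_distrib]
  split_ifs <;> ring

/-- The oriented incidence vector `eₛ - eₜ` of an edge `st`. -/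
def incidenceVec {V : Type*} [DecidableEq V] (R : Type*) [Ring R] (s t : V) : V → R :=
  Pi.single s 1 - Pi.single t 1

theorem C_comp_incidenceVec {V R : Type*} [DecidableEq V] [CommRing R] (s t : V) :
    C ∘ incidenceVec R s t = incidenceVec R⟦X⟧ s t := by
  ext1 i
  simp [incidenceVec, Pi.single_apply, apply_ite C]

theorem lapMatrix_edge {s t : V} (hst : s ≠ t) [DecidableRel (edge s t).Adj] :
    (edge s t).lapMatrix R = vecMulVec (incidenceVec R s t) (incidenceVec R s t) := by
  have hadj : ∀ i j, (if (edge s t).Adj i j then 1 else 0 : R) =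
      (if i = s then 1 else 0) * (if j = t then 1 else 0) +
      (if i = t then 1 else 0) * (if j = s then 1 else 0) := fun i j => by
    simp only [edge_adj]
    grind
  ext1 i j
  simp only [lapMatrix_apply, hadj, vecMulVec_apply, incidenceVec, Pi.single_apply, Pi.sub_apply,
    Finset.sum_add_distrib, ← Finset.mul_sum, Finset.sum_ite_eq', Finset.mem_univ, if_true]
  grind

theorem lapMatrix_sum (G : SimpleGraph V) (H : SimpleGraph W) [DecidableRel G.Adj]
    [DecidableRel H.Adj] [DecidableRel (G ⊕g H).Adj] :
    (G ⊕g H).lapMatrix R = fromBlocks (G.lapMatrix R) 0 0 (H.lapMatrix R) := by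
  ext1 (i | i) (j | j) <;> simp [lapMatrix_apply, -Finset.sum_boole]

theorem lapMatrix_iso {G : SimpleGraph V} {H : SimpleGraph W} [DecidableRel G.Adj]
    [DecidableRel H.Adj] (φ : G ≃g H) :
    G.lapMatrix R = (H.lapMatrix R).submatrix φ.toEquiv φ.toEquiv := by
  ext1 i j
  simp only [lapMatrix_apply, submatrix_apply]
  rw [← φ.toEquiv.sum_comp]
  simp [φ.map_adj_iff]

end Laplacian

section LapSeries

open SimpleGraph

variable {V W : Type*} [Fintype V] [Fintype W]

open Classical in
/-- The generating function `∑ₖ Lᵏ Xᵏ` of the powers of the Laplacian matrix `L` of a graph. -/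
noncomputable def lapSeries (G : SimpleGraph V) : Matrix V V ℝ⟦X⟧ :=
  resolventSeries (G.lapMatrix ℝ)

theorem lapSeries_eq [DecidableEq V] (G : SimpleGraph V) [DecidableRel G.Adj] :
    lapSeries G = resolventSeries (G.lapMatrix ℝ) := by
  rw [lapSeries]
  congr!

theorem lapSeries_iso {G : SimpleGraph V} {H : SimpleGraph W} (φ : G ≃g H) :
    lapSeries G = (lapSeries H).submatrix φ.toEquiv φ.toEquiv := by
  classical
  rw [lapSeries_eq, lapSeries_eq, lapMatrix_iso φ, resolventSeries_submatrix]

theorem trace_lapSeries_iso {G : SimpleGraph V} {H : SimpleGraph W} (φ : G ≃g H) :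
    (lapSeries G).trace = (lapSeries H).trace := by
  rw [lapSeries_iso φ]
  exact φ.toEquiv.sum_comp fun w => lapSeries H w w

theorem lapSeries_self_nonneg (G : SimpleGraph V) (v : V) : 0 ≤ lapSeries G v v := by
  classical
  refine nonneg_iff_forall_coeff_nonneg.mpr fun k => ?_
  rw [lapSeries_eq, coeff_resolventSeries]
  exact ((posSemidef_lapMatrix ℝ G).pow k).diag_nonneg

theorem two_mul_abs_coeff_lapSeries_le (G : SimpleGraph V) (x y : V) (k : ℕ) :
    2 * |coeff k (lapSeries G x y)| ≤ coeff k (lapSeries G x x) + coeff k (lapSeries G y y) := by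
  classical
  simp only [lapSeries_eq, coeff_resolventSeries]
  exact two_mul_abs_apply_le_of_posSemidef ((posSemidef_lapMatrix ℝ G).pow k) x y

theorem trace_lapSeries_mono {G H : SimpleGraph V} (hGH : G ≤ H) :
    (lapSeries G).trace ≤ (lapSeries H).trace := by
  classical
  rw [← sup_sdiff_cancel_right hGH]
  rw [lapSeries_eq, lapSeries_eq, lapMatrix_sup_of_disjoint disjoint_sdiff_self_right]
  exact trace_resolventSeries_le_add (posSemidef_lapMatrix ℝ G) (posSemidef_lapMatrix ℝ _)

/-- The disjoint union of two graphs, joined by the single edge `vw`. -/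
def bridgeSum {V W : Type*} (G : SimpleGraph V) (H : SimpleGraph W) (v : V) (w : W) :
    SimpleGraph (V ⊕ W) :=
  (G ⊕g H) ⊔ edge (.inl v) (.inr w)

section bridgeSum

variable (G : SimpleGraph V) (H : SimpleGraph W) (v : V) (w : W)

theorem lapMatrix_bridgeSum {R : Type*} [CommRing R] [DecidableEq V] [DecidableEq W]
    [DecidableRel G.Adj] [DecidableRel H.Adj] [DecidableRel (bridgeSum G H v w).Adj] :
    (bridgeSum G H v w).lapMatrix R = fromBlocks (G.lapMatrix R) 0 0 (H.lapMatrix R) +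
      vecMulVec (incidenceVec R (.inl v) (.inr w)) (incidenceVec R (.inl v) (.inr w)) := by
  classical
  have hdisj : Disjoint (G ⊕g H) (edge (.inl v) (.inr w)) := by
    simp [SimpleGraph.disjoint_left, edge_adj]
  rw [← lapMatrix_sum, ← lapMatrix_edge Sum.inl_ne_inr, ← lapMatrix_sup_of_disjoint hdisj]
  congr!

theorem momentSeries_fromBlocks_incidenceVec {R : Type*} [CommRing R] [DecidableEq V]
    [DecidableEq W] (A : Matrix V V R) (D : Matrix W W R) :
    momentSeries (fromBlocks A 0 0 D) (incidenceVec R (.inl v) (.inr w))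
      (incidenceVec R (.inl v) (.inr w)) = resolventSeries A v v + resolventSeries D w w := by
  rw [momentSeries, C_comp_incidenceVec, resolventSeries_fromBlocks]
  simp [incidenceVec, mulVec_sub, sub_dotProduct]

theorem lapSeries_bridgeSum_inl_inl (x y : V) :
    lapSeries (bridgeSum G H v w) (.inl x) (.inl y) = lapSeries G x y +
      X * (geomSeries (lapSeries G v v + lapSeries H w w) *
        (lapSeries G x v * lapSeries G v y)) := by
  classical
  simp only [lapSeries_eq]
  rw [lapMatrix_bridgeSum, resolventSeries_add_vecMulVec, momentSeries_fromBlocks_incidenceVec,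
    C_comp_incidenceVec]
  simp [vecMulVec_apply, resolventSeries_fromBlocks, incidenceVec, mulVec_sub, sub_vecMul,
    mul_assoc]

theorem trace_lapSeries_bridgeSum :
    (lapSeries (bridgeSum G H v w)).trace = (lapSeries G).trace + (lapSeries H).trace +
      X * (geomSeries (lapSeries G v v + lapSeries H w w) *
        d⁄dX ℝ (X * (lapSeries G v v + lapSeries H w w))) := by
  classical
  simp only [lapSeries_eq]
  rw [lapMatrix_bridgeSum, trace_resolventSeries_add_vecMulVec,
    momentSeries_fromBlocks_incidenceVec, resolventSeries_fromBlocks]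
  simp [trace]

end bridgeSum

end LapSeries

section Path

open SimpleGraph

/-- The reflection of a path. -/
def pathGraphRev (n : ℕ) : pathGraph n ≃g pathGraph n where
  toEquiv := Fin.revPerm
  map_rel_iff' {i j} := by
    simp only [pathGraph_adj, Fin.revPerm_apply, Fin.val_rev]
    lia

/-- Two paths joined end to end by an edge form a path. -/
def bridgeSumPathGraph (p q : ℕ) :
    bridgeSum (pathGraph (p + 1)) (pathGraph (q + 1)) (Fin.last p) 0 ≃g
      pathGraph (p + 1 + (q + 1)) where
  toEquiv := finSumFinEquiv
  map_rel_iff' {i j} := by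
    rcases i with i | i <;> rcases j with j | j <;>
      simp only [finSumFinEquiv_apply_left, finSumFinEquiv_apply_right, pathGraph_adj, bridgeSum,
        sup_adj, edge_adj, Fin.ext_iff, Fin.val_castAdd, Fin.val_natAdd, Sum.inl.injEq,
        Sum.inr.injEq, SimpleGraph.sum, reduceCtorEq, Fin.val_last, Fin.val_zero] <;>
      grind

/-- The `(0, 0)` entry of `lapSeries` for the path on `n + 1` vertices. -/
noncomputable def endSeries (n : ℕ) : ℝ⟦X⟧ := lapSeries (pathGraph (n + 1)) 0 0

theorem endSeries_nonneg (n : ℕ) : 0 ≤ endSeries n := lapSeries_self_nonneg _ _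

theorem lapSeries_last_last (n : ℕ) :
    lapSeries (pathGraph (n + 1)) (Fin.last n) (Fin.last n) = endSeries n := by
  have := congr_fun₂ (lapSeries_iso (pathGraphRev (n + 1))) 0 0
  simpa [pathGraphRev, endSeries] using this.symm

theorem lapSeries_zero_last_mul_le (n : ℕ) :
    lapSeries (pathGraph (n + 1)) 0 (Fin.last n) * lapSeries (pathGraph (n + 1)) (Fin.last n) 0 ≤
      endSeries n * endSeries n := by
  have hends : ∀ k, _ := two_mul_abs_coeff_lapSeries_le (pathGraph (n + 1)) 0 (Fin.last n)
  have hends' : ∀ k, _ := two_mul_abs_coeff_lapSeries_le (pathGraph (n + 1)) (Fin.last n) 0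
  rw [lapSeries_last_last, ← endSeries] at hends hends'
  exact mul_le_mul_of_abs_coeff_le (fun k => by linarith [hends k])
    (fun k => by linarith [hends' k])

theorem endSeries_add_le (p q : ℕ) :
    endSeries (p + 1 + q) ≤ endSeries p +
      X * (geomSeries (endSeries p + endSeries q) * (endSeries p * endSeries p)) := by
  have split := congr_fun₂ (lapSeries_iso (bridgeSumPathGraph p q)) (.inl 0) (.inl 0)
  rw [lapSeries_bridgeSum_inl_inl, lapSeries_last_last, ← endSeries, ← endSeries] at split
  have hzero : (bridgeSumPathGraph p q).toEquiv (.inl 0) = 0 := rfl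
  rw [submatrix_apply, hzero] at split
  change lapSeries (pathGraph (p + 1 + (q + 1))) 0 0 ≤ _
  rw [← split]
  have hgeom := geomSeries_nonneg (add_nonneg (endSeries_nonneg p) (endSeries_nonneg q))
  have hX := X_nonneg (R := ℝ)
  gcongr _ + _ * (_ * ?_)
  exact lapSeries_zero_last_mul_le p

theorem trace_lapSeries_pathGraph_add (p q : ℕ) :
    (lapSeries (pathGraph (p + 1 + (q + 1)))).trace =
      (lapSeries (pathGraph (p + 1))).trace + (lapSeries (pathGraph (q + 1))).trace +
      X * (geomSeries (endSeries p + endSeries q) * d⁄dX ℝ (X * (endSeries p + endSeries q))) := by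
  rw [← trace_lapSeries_iso (bridgeSumPathGraph p q), trace_lapSeries_bridgeSum,
    lapSeries_last_last, ← endSeries]

end Path

section TreeDecomposition

open SimpleGraph

variable {V : Type*}

theorem connectedComponentMk_deleteEdges_eq_or_eq {G : SimpleGraph V} (hG : G.Connected)
    (v u x : V) :
    (G.deleteEdges {s(v, u)}).connectedComponentMk x =
        (G.deleteEdges {s(v, u)}).connectedComponentMk v ∨
      (G.deleteEdges {s(v, u)}).connectedComponentMk x =
        (G.deleteEdges {s(v, u)}).connectedComponentMk u := by
  obtain ⟨p⟩ := hG v x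
  induction p using Walk.concatRec with
  | Hnil => exact .inl rfl
  | @Hconcat v y x _ hyx ih =>
    by_cases hedge : s(y, x) = s(v, u)
    · rcases Sym2.eq_iff.mp hedge with ⟨-, rfl⟩ | ⟨-, rfl⟩ <;> simp only [true_or, or_true]
    · have hadj : (G.deleteEdges {s(v, u)}).Adj y x := deleteEdges_adj.mpr ⟨hyx, hedge⟩
      rwa [← ConnectedComponent.connectedComponentMk_eq_of_adj hadj]

theorem exists_bridgeSum_iso {T : SimpleGraph V} (hT : T.IsTree) {v u : V} (hvu : T.Adj v u) :
    ∃ (S S' : Set V) (A : SimpleGraph S) (B : SimpleGraph S') (a : S) (b : S')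
      (φ : bridgeSum A B a b ≃g T), A.IsTree ∧ B.IsTree ∧ φ (.inl a) = v := by
  set T' := T.deleteEdges {s(v, u)} with hT'
  set c := T'.connectedComponentMk v
  set d := T'.connectedComponentMk u
  have hcd : c ≠ d := fun h =>
    isAcyclic_iff_forall_adj_isBridge.mp hT.isAcyclic hvu (ConnectedComponent.exact h)
  have hcover (x : V) : T'.connectedComponentMk x = c ∨ T'.connectedComponentMk x = d :=
    connectedComponentMk_deleteEdges_eq_or_eq hT.connected v u x
  have hbij : Function.Bijective (Sum.elim Subtype.val Subtype.val : c.supp ⊕ d.supp → V) := by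
    refine ⟨Subtype.val_injective.sumElim Subtype.val_injective ?_, fun x => ?_⟩
    · rintro ⟨x, hx⟩ ⟨_, hy⟩ rfl
      exact hcd (hx.symm.trans hy)
    · exact (hcover x).elim (fun h => ⟨.inl ⟨x, h⟩, rfl⟩) fun h => ⟨.inr ⟨x, h⟩, rfl⟩
  have hT'acyclic : T'.IsAcyclic := hT.isAcyclic.anti (deleteEdges_le _)
  refine ⟨c.supp, d.supp, c.toSimpleGraph, d.toSimpleGraph, ⟨v, rfl⟩, ⟨u, rfl⟩,
    ⟨.ofBijective _ hbij, ?_⟩, hT'acyclic.isTree_connectedComponent c,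
    hT'acyclic.isTree_connectedComponent d, rfl⟩
  have hadj (x y : V) : T.Adj x y ↔ T'.Adj x y ∨ s(x, y) = s(v, u) := by
    simp only [hT', deleteEdges_adj, Set.mem_singleton_iff]
    have : s(x, y) = s(v, u) → T.Adj x y := fun h => by simpa [← mem_edgeSet, h] using hvu
    tauto
  have hmk {x y : V} (h : T'.Adj x y) : T'.connectedComponentMk x = T'.connectedComponentMk y :=
    ConnectedComponent.connectedComponentMk_eq_of_adj h
  rintro (⟨x, hx⟩ | ⟨x, hx⟩) (⟨y, hy⟩ | ⟨y, hy⟩) <;>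
    simp only [bridgeSum, sup_adj, edge_adj, hadj, ConnectedComponent.toSimpleGraph, induce_adj,
      SimpleGraph.sum, Equiv.ofBijective_apply, Sum.elim_inl, Sum.elim_inr, Sum.inl.injEq,
      Sum.inr.injEq, reduceCtorEq, Sym2.eq_iff] <;>
    rw [ConnectedComponent.mem_supp_iff] at hx hy <;> grind

end TreeDecomposition

section TreeComparison

open SimpleGraph

variable {V W : Type*} [Fintype V] [Fintype W] {G : SimpleGraph V} {H : SimpleGraph W}
  {v : V} {w : W} {p q : ℕ}

theorem endSeries_le_lapSeries_bridgeSum (hG : endSeries p ≤ lapSeries G v v)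
    (hH : endSeries q ≤ lapSeries H w w) :
    endSeries (p + 1 + q) ≤ lapSeries (bridgeSum G H v w) (.inl v) (.inl v) := by
  have hp := endSeries_nonneg p
  have hpq := add_nonneg hp (endSeries_nonneg q)
  have hgeom := geomSeries_mono hpq (add_le_add hG hH)
  have hgeom₀ := (geomSeries_nonneg hpq).trans hgeom
  have hX := X_nonneg (R := ℝ)
  have hG₀ := hp.trans hG
  rw [lapSeries_bridgeSum_inl_inl]
  refine (endSeries_add_le p q).trans ?_
  gcongr

theorem trace_lapSeries_pathGraph_le_bridgeSum (hG : endSeries p ≤ lapSeries G v v)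
    (hH : endSeries q ≤ lapSeries H w w)
    (hGtr : (lapSeries (pathGraph (p + 1))).trace ≤ (lapSeries G).trace)
    (hHtr : (lapSeries (pathGraph (q + 1))).trace ≤ (lapSeries H).trace) :
    (lapSeries (pathGraph (p + 1 + (q + 1)))).trace ≤
      (lapSeries (bridgeSum G H v w)).trace := by
  have hpq := add_nonneg (endSeries_nonneg p) (endSeries_nonneg q)
  have hends := add_le_add hG hH
  have hgeom := geomSeries_mono hpq hends
  have hgeom₀ := (geomSeries_nonneg hpq).trans hgeom
  have hX := X_nonneg (R := ℝ)
  have hderiv₀ := derivative_nonneg (mul_nonneg hX hpq)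
  rw [trace_lapSeries_pathGraph_add, trace_lapSeries_bridgeSum]
  gcongr
  exact derivative_mono (mul_le_mul_of_nonneg_left hends hX)

theorem nonempty_iso_of_subsingleton [Subsingleton V] (G : SimpleGraph V) (H : SimpleGraph W)
    (hcard : Fintype.card V = Fintype.card W) : Nonempty (G ≃g H) := by
  have e := Fintype.equivOfCardEq hcard
  have := e.symm.subsingleton
  exact ⟨e, fun {x y} => by simp [Subsingleton.elim x y]⟩

theorem endSeries_le_and_trace_le_of_isTree {T : SimpleGraph V} (hT : T.IsTree) (v : V) {n : ℕ}
    (hn : Fintype.card V = n + 1) :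
    endSeries n ≤ lapSeries T v v ∧
      (lapSeries (pathGraph (n + 1))).trace ≤ (lapSeries T).trace := by
  induction n using Nat.strong_induction_on generalizing V with
  | h n ih =>
  rcases subsingleton_or_nontrivial V with _ | _
  · obtain rfl : n = 0 := by have := Fintype.card_le_one_iff_subsingleton.mpr ‹_›; lia
    obtain ⟨φ⟩ := nonempty_iso_of_subsingleton T (pathGraph (0 + 1)) (by simpa using hn)
    have hφv : φ.toEquiv v = 0 := Subsingleton.elim (α := Fin 1) _ _
    rw [trace_lapSeries_iso φ, lapSeries_iso φ, Matrix.submatrix_apply, hφv]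
    exact ⟨le_rfl, le_rfl⟩
  obtain ⟨u, hvu⟩ := hT.connected.preconnected.exists_adj_of_nontrivial v
  obtain ⟨S, S', A, B, a, b, φ, hA, hB, rfl⟩ := exists_bridgeSum_iso hT hvu
  have := Fintype.ofFinite S
  have := Fintype.ofFinite S'
  obtain ⟨p, hp⟩ := Nat.exists_eq_succ_of_ne_zero (Fintype.card_pos_iff.mpr ⟨a⟩).ne'
  obtain ⟨q, hq⟩ := Nat.exists_eq_succ_of_ne_zero (Fintype.card_pos_iff.mpr ⟨b⟩).ne'
  obtain rfl : n = p + 1 + q := by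
    have := Fintype.card_congr φ.toEquiv
    rw [Fintype.card_sum] at this
    lia
  obtain ⟨hGa, hGtr⟩ := ih p (by lia) hA a hp
  obtain ⟨hHb, hHtr⟩ := ih q (by lia) hB b hq
  rw [← trace_lapSeries_iso φ]
  refine ⟨?_, trace_lapSeries_pathGraph_le_bridgeSum hGa hHb hGtr hHtr⟩
  have := endSeries_le_lapSeries_bridgeSum hGa hHb
  rwa [lapSeries_iso φ] at this

end TreeComparison

section LongestPath

open SimpleGraph

variable {V : Type*} {G : SimpleGraph V} {u v : V} {p : G.Walk u v}

theorem mem_support_of_adj_of_longest [G.LocallyFinite] (hdeg : ∀ x, G.degree x ≤ 2)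
    (hp : p.IsPath) (hmax : ∀ u' v' (q : G.Walk u' v'), q.IsPath → q.length ≤ p.length) {x y : V}
    (hx : x ∈ p.support) (hxy : G.Adj x y) : y ∈ p.support := by
  obtain ⟨i, rfl, hi⟩ := Walk.mem_support_iff_exists_getVert.mp hx
  by_cases hstart : i = 0
  · by_contra hy
    rw [hstart, Walk.getVert_zero] at hxy
    simpa using hmax _ _ (Walk.cons hxy.symm p) (hp.cons hy)
  by_cases hend : i = p.length
  · by_contra hy
    rw [hend, Walk.getVert_length] at hxy
    simpa using hmax _ _ (p.concat hxy) (hp.concat hy hxy)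
  have hnbr : p.toSubgraph.neighborSet (p.getVert i) = G.neighborSet (p.getVert i) := by
    refine Set.eq_of_subset_of_ncard_le (p.toSubgraph.neighborSet_subset _) ?_
    rw [hp.ncard_neighborSet_toSubgraph_internal_eq_two hstart (by lia),
      Set.ncard_eq_toFinset_card', Set.toFinset_card, card_neighborSet_eq_degree]
    exact hdeg _
  have hadj : y ∈ p.toSubgraph.neighborSet (p.getVert i) := hnbr ▸ hxy
  exact p.mem_verts_toSubgraph.mp hadj.snd_mem

theorem nonempty_iso_pathGraph_of_forall_mem_support (hG : G.IsTree) (hp : p.IsPath)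
    (hspan : ∀ x, x ∈ p.support) : Nonempty (G ≃g pathGraph (p.length + 1)) := by
  classical
  have hspanning : p.toSubgraph.IsSpanning := fun x => p.mem_verts_toSubgraph.mpr (hspan x)
  have φ : pathGraph (p.length + 1) ≃g p.toSubgraph.spanningCoe :=
    hp.pathGraphIsoToSubgraph.trans
      (p.toSubgraph.spanningCoeEquivCoeOfSpanning hspanning).symm
  have hconn : p.toSubgraph.spanningCoe.Connected :=
    φ.connected_iff.mp (pathGraph_connected _)
  have hle := p.toSubgraph.spanningCoe_le
  have heq := hle.antisymm ((isTree_iff_minimal_connected.mp hG).2 hconn hle)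
  rw [heq] at φ
  exact ⟨φ.symm⟩

theorem nonempty_iso_pathGraph_of_forall_degree_le_two [Fintype V] {T : SimpleGraph V}
    [DecidableRel T.Adj] (hT : T.IsTree) (hdeg : ∀ x, T.degree x ≤ 2) :
    Nonempty (T ≃g pathGraph (Fintype.card V)) := by
  have := hT.connected.nonempty
  obtain ⟨u, v, p, hp, hmax⟩ := Walk.exists_isPath_forall_isPath_length_le_length T
  have hspan : ∀ x, x ∈ p.support := by
    intro x
    by_contra hx
    obtain ⟨q⟩ := hT.connected u x
    obtain ⟨d, -, hfst, hsnd⟩ := q.exists_boundary_dart {y | y ∈ p.support} p.start_mem_support hx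
    exact hsnd (mem_support_of_adj_of_longest hdeg hp hmax hfst d.adj)
  obtain ⟨φ⟩ := nonempty_iso_pathGraph_of_forall_mem_support hT hp hspan
  have hcard : Fintype.card V = p.length + 1 := by simpa using Fintype.card_congr φ.toEquiv
  exact hcard ▸ ⟨φ⟩

end LongestPath

section SecondMoment

open SimpleGraph

variable {V : Type*} [Fintype V] [DecidableEq V]

theorem trace_lapMatrix_sq {R : Type*} [CommRing R] (G : SimpleGraph V) [DecidableRel G.Adj] :
    (G.lapMatrix R ^ 2).trace = ∑ v, ((G.degree v : R) ^ 2 + G.degree v) := by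
  have hsq (v w : V) : G.lapMatrix R v w * G.lapMatrix R w v =
      (if v = w then (G.degree v : R) ^ 2 else 0) + if G.Adj v w then 1 else 0 := by
    obtain rfl | hvw := eq_or_ne v w
    · simp [lapMatrix, degMatrix, sq]
    · by_cases hadj : G.Adj v w <;>
        simp [lapMatrix, degMatrix, hvw, hvw.symm, hadj, G.adj_comm w v]
  rw [pow_two, Matrix.trace]
  simp only [Matrix.diag_apply, Matrix.mul_apply, hsq, Finset.sum_add_distrib,
    ← degree_eq_sum_if_adj, Finset.sum_ite_eq, Finset.mem_univ, if_true]

theorem trace_lapMatrix_sq_eq_sum_add_card {R : Type*} [CommRing R] (G : SimpleGraph V)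
    [DecidableRel G.Adj] :
    (G.lapMatrix R ^ 2).trace =
      ∑ v, ((G.degree v : R) - 1) * (G.degree v - 2) + 8 * G.edgeFinset.card -
        2 * Fintype.card V := by
  have handshake : ∑ v, (G.degree v : R) = 2 * G.edgeFinset.card := by
    exact_mod_cast congrArg (Nat.cast : ℕ → R) G.sum_degrees_eq_twice_card_edges
  have hdeg (v : V) : (G.degree v : R) ^ 2 + G.degree v =
      (G.degree v - 1) * (G.degree v - 2) + 4 * G.degree v - 2 := by ring
  simp_rw [trace_lapMatrix_sq, hdeg, Finset.sum_sub_distrib, Finset.sum_add_distrib,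
    ← Finset.mul_sum, handshake, Finset.sum_const, Finset.card_univ, nsmul_eq_mul]
  ring

theorem degree_pathGraph_le_two {n : ℕ} (i : Fin n) [DecidableRel (pathGraph n).Adj] :
    (pathGraph n).degree i ≤ 2 := by
  rw [← card_neighborFinset_eq_degree, ← Finset.card_map Fin.valEmbedding]
  suffices hsub : ((pathGraph n).neighborFinset i).map Fin.valEmbedding ⊆ {(i : ℕ) - 1, (i : ℕ) + 1}
    from (Finset.card_le_card hsub).trans Finset.card_le_two
  intro k
  simp only [Finset.mem_map, mem_neighborFinset, pathGraph_adj, Finset.mem_insert,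
    Finset.mem_singleton, Fin.valEmbedding_apply]
  grind

theorem card_edgeFinset_pathGraph_le {n : ℕ} [DecidableRel (pathGraph (n + 1)).Adj] :
    (pathGraph (n + 1)).edgeFinset.card ≤ n := by
  suffices hsub : (pathGraph (n + 1)).edgeFinset ⊆
      Finset.univ.image fun i : Fin n => s(i.castSucc, i.succ) from
    (Finset.card_le_card hsub).trans (Finset.card_image_le.trans_eq (Finset.card_fin n))
  intro e he
  induction e with
  | h i j =>
    rw [mem_edgeFinset, mem_edgeSet, pathGraph_adj] at he
    rw [Finset.mem_image]
    rcases he with hij | hji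
    · exact ⟨⟨i, by lia⟩, Finset.mem_univ _, by grind [Fin.ext_iff, Sym2.eq_iff]⟩
    · exact ⟨⟨j, by lia⟩, Finset.mem_univ _, by grind [Fin.ext_iff, Sym2.eq_iff]⟩

theorem trace_lapMatrix_sq_pathGraph_le {n : ℕ} [DecidableRel (pathGraph (n + 2)).Adj] :
    ((pathGraph (n + 2)).lapMatrix ℝ ^ 2).trace ≤ 6 * n + 4 := by
  have hdeg (i : Fin (n + 2)) :
      (((pathGraph (n + 2)).degree i : ℝ) - 1) * ((pathGraph (n + 2)).degree i - 2) = 0 := by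
    have hpos := (pathGraph_preconnected (n + 2)).degree_pos_of_nontrivial i
    have hle := degree_pathGraph_le_two i
    interval_cases (pathGraph (n + 2)).degree i <;> norm_num
  have hedges : ((pathGraph (n + 2)).edgeFinset.card : ℝ) ≤ n + 1 := by
    exact_mod_cast card_edgeFinset_pathGraph_le
  rw [trace_lapMatrix_sq_eq_sum_add_card, Finset.sum_eq_zero fun i _ => hdeg i, Fintype.card_fin]
  push_cast
  linarith

theorem sub_one_mul_sub_two_nonneg (d : ℕ) : (0 : ℝ) ≤ ((d : ℝ) - 1) * (d - 2) := by
  obtain h | h : d ≤ 1 ∨ 2 ≤ d := by lia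
  · have : (d : ℝ) ≤ 1 := mod_cast h
    exact mul_nonneg_of_nonpos_of_nonpos (by linarith) (by linarith)
  · have : (2 : ℝ) ≤ d := mod_cast h
    exact mul_nonneg (by linarith) (by linarith)

theorem nonempty_iso_pathGraph_of_trace_lapMatrix_sq_le {G : SimpleGraph V} [DecidableRel G.Adj]
    (hG : G.Connected) (htr : (G.lapMatrix ℝ ^ 2).trace ≤ 6 * Fintype.card V - 8) :
    Nonempty (G ≃g pathGraph (Fintype.card V)) := by
  have hnonneg : ∀ v ∈ Finset.univ, 0 ≤ ((G.degree v : ℝ) - 1) * (G.degree v - 2) :=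
    fun v _ => sub_one_mul_sub_two_nonneg (G.degree v)
  have hsum := Finset.sum_nonneg hnonneg
  have hcard : Fintype.card V ≤ G.edgeFinset.card + 1 := by
    simpa [edgeFinset] using hG.card_vert_le_card_edgeSet_add_one
  have hcard' : (Fintype.card V : ℝ) ≤ G.edgeFinset.card + 1 := mod_cast hcard
  rw [trace_lapMatrix_sq_eq_sum_add_card] at htr
  have hsum_zero : ∑ v, ((G.degree v : ℝ) - 1) * (G.degree v - 2) = 0 := by linarith
  have hedges' : (G.edgeFinset.card : ℝ) + 1 ≤ Fintype.card V := by linarith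
  have hedges : G.edgeFinset.card + 1 = Fintype.card V :=
    le_antisymm (mod_cast hedges') hcard
  have htree : G.IsTree :=
    isTree_iff_connected_and_card.mpr ⟨hG, by simpa [edgeFinset] using hedges⟩
  refine nonempty_iso_pathGraph_of_forall_degree_le_two htree fun v => ?_
  have hv := (Finset.sum_eq_zero_iff_of_nonneg hnonneg).mp hsum_zero v (Finset.mem_univ v)
  rcases mul_eq_zero.mp hv with h | h <;> rw [sub_eq_zero] at h <;> norm_cast at h <;> lia

end SecondMoment

section LaplacianEstradaIndex

open SimpleGraph

theorem trace_pow_eq_sum_eigenvalues_pow {n : Type*} [Fintype n] [DecidableEq n]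
    {A : Matrix n n ℝ} (hA : A.IsHermitian) (k : ℕ) :
    (A ^ k).trace = ∑ i, hA.eigenvalues i ^ k := by
  conv_lhs => rw [hA.spectral_theorem]
  rw [← map_pow, Unitary.conjStarAlgAut_apply, trace_mul_cycle, Unitary.coe_star_mul_self, one_mul,
    diagonal_pow, trace_diagonal]
  rfl

theorem hasSum_trace_pow_div_factorial {n : Type*} [Fintype n] [DecidableEq n]
    {A : Matrix n n ℝ} (hA : A.IsHermitian) :
    HasSum (fun k : ℕ => (A ^ k).trace / k.factorial) (∑ i, Real.exp (hA.eigenvalues i)) := by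
  simp only [trace_pow_eq_sum_eigenvalues_pow hA, Finset.sum_div, Real.exp_eq_exp_ℝ]
  exact hasSum_sum fun i _ => NormedSpace.expSeries_div_hasSum_exp _

variable {V : Type*} [Fintype V]

theorem hasSum_LEE [DecidableEq V] (G : SimpleGraph V) :
    HasSum (fun k : ℕ => coeff k (lapSeries G).trace / k.factorial) (LEE G) := by
  let _ : DecidableRel G.Adj := Classical.decRel G.Adj
  simp only [lapSeries_eq, coeff_trace_resolventSeries]
  exact hasSum_trace_pow_div_factorial (posSemidef_lapMatrix ℝ G).1

theorem trace_lapSeries_pathGraph_le {G : SimpleGraph V} (hG : G.Connected) {n : ℕ}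
    (hn : Fintype.card V = n) : (lapSeries (pathGraph n)).trace ≤ (lapSeries G).trace := by
  have := hG.nonempty
  obtain ⟨T, hTG, hT⟩ := hG.exists_isTree_le
  obtain ⟨m, rfl⟩ := Nat.exists_eq_succ_of_ne_zero (hn ▸ Fintype.card_ne_zero)
  have hpath := (endSeries_le_and_trace_le_of_isTree hT (Classical.arbitrary V) hn).2
  exact hpath.trans (trace_lapSeries_mono hTG)

theorem coeff_two_trace_lapSeries_pathGraph_lt {G : SimpleGraph V} (hG : G.Connected) {n : ℕ}
    (hn : Fintype.card V = n) (hne : ¬ Nonempty (G ≃g pathGraph n)) :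
    coeff 2 (lapSeries (pathGraph n)).trace < coeff 2 (lapSeries G).trace := by
  classical
  have := hG.nonempty
  have : Nontrivial V := by
    by_contra! hsub
    exact hne (nonempty_iso_of_subsingleton G (pathGraph n) (by simpa using hn))
  obtain ⟨m, rfl⟩ := Nat.exists_eq_add_of_le' (hn ▸ Fintype.one_lt_card : 2 ≤ n)
  contrapose! hne
  simp only [lapSeries_eq, coeff_trace_resolventSeries] at hne
  rw [← hn]
  refine nonempty_iso_pathGraph_of_trace_lapMatrix_sq_le hG ?_
  have hpath := trace_lapMatrix_sq_pathGraph_le (n := m)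
  rw [hn]
  push_cast
  linarith

theorem path_lt_lee_general [DecidableEq V] {n : ℕ} (G : SimpleGraph V) (hG : G.Connected)
    (hn : Fintype.card V = n) (hne : ¬ Nonempty (G ≃g pathGraph n)) :
    LEE (pathGraph n) < LEE G := by
  refine hasSum_lt (i := 2) (fun k => ?_) ?_ (hasSum_LEE (pathGraph n)) (hasSum_LEE G)
  · exact div_le_div_of_nonneg_right (trace_lapSeries_pathGraph_le hG hn k) (by positivity)
  · exact div_lt_div_of_pos_right (coeff_two_trace_lapSeries_pathGraph_lt hG hn hne) (by positivity)

end LaplacianEstradaIndex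

/-- Among all trees on `n` vertices, the path has the strictly minimal
Laplacian Estrada index. -/
theorem path_lt_lee {n : ℕ} (T : SimpleGraph (Fin n)) (hT : T.IsTree)
    (hne : ¬ Nonempty (T ≃g SimpleGraph.pathGraph n)) :
    LEE (SimpleGraph.pathGraph n) < LEE T :=
  path_lt_lee_general T hT.connected (Fintype.card_fin n) hne
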